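/- arXiv:1805.07743 — 4 statements merged into one kernel-verified Lean document; each statement's English description precedes it below -/
import Mathlib

section
/- Let ν > 0, Ψ ≥ 0, χ ≥ 0 and U* be real constants, let U : ℝ → ℝ be a concave function, let L : ℕ → ℝ satisfy L(t) ≥ 0 for all t and L(1) = 0, and let φ : ℕ → ℝ be a sequence. Suppose that for every τ ≥ 1 the drift-plus-penalty bound L(τ+1) − L(τ) − ν·U(φ(τ)) ≤ Ψ + χ − ν·U* holds. Then for every t ≥ 1, U((1/t)·∑_{τ=1}^{t} φ(τ)) ≥ U* − (Ψ + χ)/ν. -/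
/-!
Telescoping the drift bound from `L 1 = 0` and discarding `L (t + 1) ≥ 0` bounds the average of
`U (φ τ)` over `τ = 1, …, t` below by `Ustar - (Ψ + χ) / ν`; Jensen's inequality for the concave
`U` with uniform weights `1 / t` carries this over to `U` of the average of `φ`.
-/

/-- Deterministic core of Theorem 1 (Optimality): summing the per-slot
drift-plus-penalty bound, using `L ≥ 0`, `L 1 = 0`, dividing by `t` and
applying Jensen's inequality for the concave utility `U` yields the
utility bound `U((1/t)·∑_{τ=1}^t φ τ) ≥ U* − (Ψ + χ)/ν`. -/
theorem stmt_0 (ν Ψ χ Ustar : ℝ) (hν : 0 < ν) (hΨ : 0 ≤ Ψ) (hχ : 0 ≤ χ)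
    (U : ℝ → ℝ) (hU : ConcaveOn ℝ Set.univ U)
    (L : ℕ → ℝ) (hL : ∀ t, 0 ≤ L t) (hL1 : L 1 = 0)
    (φ : ℕ → ℝ)
    (hdrift : ∀ τ, 1 ≤ τ → L (τ + 1) - L τ - ν * U (φ τ) ≤ Ψ + χ - ν * Ustar) :
    ∀ t : ℕ, 1 ≤ t →
      U ((1 / (t : ℝ)) * ∑ τ ∈ Finset.Icc 1 t, φ τ) ≥ Ustar - (Ψ + χ) / ν := by
  intro t ht
  have ht0 : (0 : ℝ) < t := by exact_mod_cast ht
  -- The drift bound telescopes; `L 1 = 0` starts the induction at the empty sum.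
  have htel : ∀ n : ℕ, L (n + 1) - ν * ∑ τ ∈ Finset.Icc 1 n, U (φ τ)
      ≤ n * (Ψ + χ - ν * Ustar) := by
    intro n
    induction n with
    | zero => simp [hL1]
    | succ n ih =>
      rw [Finset.sum_Icc_succ_top (by omega)]
      have h := hdrift (n + 1) (by omega)
      push_cast
      linarith
  have hjensen : (1 / (t : ℝ)) * ∑ τ ∈ Finset.Icc 1 t, U (φ τ)
      ≤ U ((1 / (t : ℝ)) * ∑ τ ∈ Finset.Icc 1 t, φ τ) := by
    have h := hU.le_map_sum (t := Finset.Icc 1 t) (w := fun _ => 1 / (t : ℝ)) (p := φ)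
      (fun _ _ => by positivity) (by simp [ht0.ne']) (fun _ _ => Set.mem_univ _)
    simpa only [smul_eq_mul, ← Finset.mul_sum] using h
  refine le_trans ?_ hjensen
  have h : t * (ν * Ustar - (Ψ + χ)) ≤ ν * ∑ τ ∈ Finset.Icc 1 t, U (φ τ) := by
    linarith [htel t, hL (t + 1)]
  calc Ustar - (Ψ + χ) / ν = t * (ν * Ustar - (Ψ + χ)) / (t * ν) := by field_simp
    _ ≤ ν * (∑ τ ∈ Finset.Icc 1 t, U (φ τ)) / (t * ν) := by gcongr
    _ = 1 / (t : ℝ) * ∑ τ ∈ Finset.Icc 1 t, U (φ τ) := by field_simp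
end

section
/- Let ν > 0, ϰ > 0 and μ^max ≥ 0 be real constants. Let Y, φ, x : ℕ → ℝ be sequences with Y(0) = 0, Y(t+1) = [Y(t) + φ(t) − x(t)]^+ for all t, 0 ≤ φ(t) ≤ μ^max and 0 ≤ x(t) for all t, and suppose φ(t) = 0 whenever Y(t) > ν·ϰ. Then Y(t) ≤ ν·ϰ + μ^max for every t ∈ ℕ. -/
/-- Virtual queue bound (equation (18)) of Theorem 1: if the virtual queue is
updated as `Y(t+1) = [Y(t) + φ(t) − x(t)]⁺`, the admitted rate `φ` is bounded
by `μmax` and is set to zero whenever `Y(t) > ν·ϰ`, then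
`Y(t) ≤ ν·ϰ + μmax` for all `t`. -/
theorem stmt_1 (ν ϰ μmax : ℝ) (hν : 0 < ν) (hϰ : 0 < ϰ) (hμ : 0 ≤ μmax)
    (Y φ x : ℕ → ℝ) (hY0 : Y 0 = 0)
    (hYrec : ∀ t, Y (t + 1) = max (Y t + φ t - x t) 0)
    (hφ : ∀ t, 0 ≤ φ t ∧ φ t ≤ μmax) (hx : ∀ t, 0 ≤ x t)
    (hpolicy : ∀ t, ν * ϰ < Y t → φ t = 0) :
    ∀ t : ℕ, Y t ≤ ν * ϰ + μmax := by
  have hpos : 0 < ν * ϰ := mul_pos hν hϰ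
  intro t
  induction t with
  | zero => linarith
  | succ t ih =>
    rw [hYrec]
    refine max_le ?_ (by linarith)
    have hxt := hx t
    -- Above the threshold nothing is admitted, so the queue cannot grow;
    -- below it, one step adds at most `μmax`.
    rcases lt_or_ge (ν * ϰ) (Y t) with h | h
    · have hzero := hpolicy t h
      linarith
    · have hle := (hφ t).2
      linarith
end

section
/- Let ν > 0, ϰ > 0 and μ^max ≥ 0 be real constants. Let Q, a, s : ℕ → ℝ be sequences with Q(0) = 0, Q(t+1) = [Q(t) − s(t)]^+ + a(t) for all t, 0 ≤ a(t) ≤ μ^max and s(t) ≥ 0 for all t, and suppose a(t) ≤ s(t) whenever Q(t) > ν·ϰ. Then Q(t) ≤ ν·ϰ + μ^max for every t ∈ ℕ. -/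
/-- Network queue bound (equation (17)) of Theorem 1: for the queue
`Q(t+1) = [Q(t) − s(t)]⁺ + a(t)` with arrivals bounded by `μmax` and a policy
guaranteeing `a(t) ≤ s(t)` once `Q(t) > ν·ϰ`, we have
`Q(t) ≤ ν·ϰ + μmax` for all `t`. -/
theorem stmt_2 (ν ϰ μmax : ℝ) (hν : 0 < ν) (hϰ : 0 < ϰ) (hμ : 0 ≤ μmax)
    (Q a s : ℕ → ℝ) (hQ0 : Q 0 = 0)
    (hQrec : ∀ t, Q (t + 1) = max (Q t - s t) 0 + a t)
    (ha : ∀ t, 0 ≤ a t ∧ a t ≤ μmax) (hs : ∀ t, 0 ≤ s t)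
    (hpolicy : ∀ t, ν * ϰ < Q t → a t ≤ s t) :
    ∀ t : ℕ, Q t ≤ ν * ϰ + μmax := by
  have hpos : 0 < ν * ϰ := mul_pos hν hϰ
  intro t
  induction t with
  | zero => linarith
  | succ t ih =>
    rw [hQrec]
    have hat := (ha t).2
    have hst := hs t
    rcases max_cases (Q t - s t) 0 with ⟨h, _⟩ | ⟨h, _⟩
    · rw [h]
      -- Above the threshold the queue does not grow; below it, one slot adds at most `μmax`.
      rcases lt_or_ge (ν * ϰ) (Q t) with hgt | hle
      · linarith [hpolicy t hgt]
      · linarith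
    · linarith
end

section
/- For all real numbers a ≥ 0, b ≥ 0 and D ∈ ℝ, the inequality (1 + a)/(1 + b) ≥ exp(D) holds if and only if there exists a real number y such that (2 + a)/2 ≥ √(y² + (a/2)²) and y²/(1 + b) ≥ exp(D). -/
/-- Equivalence between the nonconvex rate-difference constraint (13) and the
pair of constraints (22)–(23) obtained via the slack variable `y`:
`(1 + a)/(1 + b) ≥ e^D` iff there exists `y` with
`(2 + a)/2 ≥ √(y² + (a/2)²)` and `y²/(1 + b) ≥ e^D`. -/
theorem stmt_11 (a b D : ℝ) (ha : 0 ≤ a) (hb : 0 ≤ b) :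
    (1 + a) / (1 + b) ≥ Real.exp D ↔
      ∃ y : ℝ, (2 + a) / 2 ≥ Real.sqrt (y ^ 2 + (a / 2) ^ 2) ∧
        y ^ 2 / (1 + b) ≥ Real.exp D := by
  -- Squaring the cone constraint cancels `(a / 2) ^ 2`, leaving `y ^ 2 ≤ 1 + a`.
  have cone : ∀ y : ℝ, (2 + a) / 2 ≥ Real.sqrt (y ^ 2 + (a / 2) ^ 2) ↔ y ^ 2 ≤ 1 + a := by
    intro y
    rw [ge_iff_le, Real.sqrt_le_left (by linarith)]
    constructor <;> intro h <;> nlinarith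
  constructor
  · intro h
    have hy : Real.sqrt (1 + a) ^ 2 = 1 + a := Real.sq_sqrt (by linarith)
    exact ⟨Real.sqrt (1 + a), (cone _).2 hy.le, by rwa [hy]⟩
  · rintro ⟨y, h₁, h₂⟩
    exact h₂.le.trans (div_le_div_of_nonneg_right ((cone y).1 h₁) (by linarith))
end
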